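/- arXiv:2511.22600 — 2 statements merged into one kernel-verified Lean document; each statement's English description precedes it below -/
import Mathlib

section
/- Let c be a natural number and u, w : Fin c → ℝ nonnegative weight vectors with w not identically zero. For m > 0 set G(m) = inf{ Σ_i u(i)·α(i) : α : Fin c → ℕ, Σ_i w(i)·α(i) ≥ m }. Then lim_{m→∞} G(m)/m exists and equals min{ u(i)/w(i) : i ∈ Fin c, w(i) > 0 }. -/
/-! If `0 ≤ L` is a lower bound of the ratios `u i / w i` with `w i > 0`, then `L * w i ≤ u i` for
every `i`, hence `L * ⟨w, α⟩ ≤ ⟨u, α⟩`: passing from the basis vectors to all lattice points does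
not change the infimum `L` of the ratios. On any additive monoid, `W a ≥ m` then forces
`U a ≥ L * m`, while rounding `m / W a` up to an integer `n` gives the competitor `n • a`, of
`U`-value at most `(U a / W a) * m + U a`. Dividing by `m` leaves an error `U a / m` tending to
`0`. -/

open Filter

section Superlevel

variable {A : Type*}

/-- The infimum of `U` over the superlevel set `{W ≥ m}`, the function `G m` of the toric
computation when `U` and `W` are the `u`-weight and the `w`-weight on lattice points. It takes the
junk value `0` if the superlevel set is empty or `U` is unbounded below on it. -/
noncomputable def superlevelInf (U W : A → ℝ) (m : ℝ) : ℝ :=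
  sInf {x : ℝ | ∃ a, m ≤ W a ∧ x = U a}

/-- The set of ratios `U a / W a` at the points where `W` is positive. It is used both for weight
vectors, as functions of the coordinate, and for the weights of lattice points. -/
def positiveRatios (U W : A → ℝ) : Set ℝ :=
  {x : ℝ | ∃ a, 0 < W a ∧ x = U a / W a}

variable {U W : A → ℝ} {L m : ℝ} {a : A}

theorem superlevelInf_le (hU : ∀ a, 0 ≤ U a) (ha : m ≤ W a) : superlevelInf U W m ≤ U a :=
  csInf_le ⟨0, by rintro _ ⟨b, -, rfl⟩; exact hU b⟩ ⟨a, ha, rfl⟩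

theorem zero_mem_lowerBounds_positiveRatios (hU : ∀ a, 0 ≤ U a) :
    0 ∈ lowerBounds (positiveRatios U W) := by
  rintro _ ⟨a, ha, rfl⟩
  exact div_nonneg (hU a) ha.le

theorem isGLB_sInf_positiveRatios (hU : ∀ a, 0 ≤ U a) (hW : ∃ a, 0 < W a) :
    IsGLB (positiveRatios U W) (sInf (positiveRatios U W)) :=
  let ⟨a, ha⟩ := hW
  isGLB_csInf ⟨_, a, ha, rfl⟩ ⟨0, zero_mem_lowerBounds_positiveRatios hU⟩

theorem mul_le_of_mem_lowerBounds_positiveRatios (hL : L ∈ lowerBounds (positiveRatios U W))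
    (hL0 : 0 ≤ L) (ha : 0 ≤ U a) : L * W a ≤ U a := by
  rcases le_or_gt (W a) 0 with hWa | hWa
  · exact (mul_nonpos_of_nonneg_of_nonpos hL0 hWa).trans ha
  · exact (le_div_iff₀ hWa).1 (hL ⟨a, hWa, rfl⟩)

end Superlevel

section AddMonoid

variable {A : Type*} [AddMonoid A] {U W : A →+ ℝ} {L m : ℝ} {a : A}

theorem le_map_ceil_nsmul (ha : 0 < W a) : m ≤ W (⌈m / W a⌉₊ • a) := by
  rw [map_nsmul, nsmul_eq_mul]
  exact (div_le_iff₀ ha).1 (Nat.le_ceil _)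

theorem mul_le_superlevelInf (hU : ∀ a, 0 ≤ U a) (hW : ∃ a, 0 < W a)
    (hL : L ∈ lowerBounds (positiveRatios U W)) (hL0 : 0 ≤ L) :
    L * m ≤ superlevelInf U W m := by
  obtain ⟨a, ha⟩ := hW
  refine le_csInf ⟨_, _, le_map_ceil_nsmul ha, rfl⟩ ?_
  rintro _ ⟨b, hb, rfl⟩
  calc L * m ≤ L * W b := mul_le_mul_of_nonneg_left hb hL0
    _ ≤ U b := mul_le_of_mem_lowerBounds_positiveRatios hL hL0 (hU b)

theorem superlevelInf_le_div_mul_add (hU : ∀ a, 0 ≤ U a) (ha : 0 < W a) (hm : 0 ≤ m) :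
    superlevelInf U W m ≤ U a / W a * m + U a := by
  have hceil : (⌈m / W a⌉₊ : ℝ) ≤ m / W a + 1 :=
    (Nat.ceil_lt_add_one (div_nonneg hm ha.le)).le
  calc superlevelInf U W m ≤ U (⌈m / W a⌉₊ • a) := superlevelInf_le hU (le_map_ceil_nsmul ha)
    _ = ⌈m / W a⌉₊ * U a := by rw [map_nsmul, nsmul_eq_mul]
    _ ≤ (m / W a + 1) * U a := mul_le_mul_of_nonneg_right hceil (hU a)
    _ = U a / W a * m + U a := by ring

theorem tendsto_superlevelInf_div (hU : ∀ a, 0 ≤ U a) (hW : ∃ a, 0 < W a)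
    (hL : IsGLB (positiveRatios U W) L) :
    Tendsto (fun m ↦ superlevelInf U W m / m) atTop (nhds L) := by
  have hL0 : 0 ≤ L := hL.2 (zero_mem_lowerBounds_positiveRatios hU)
  refine tendsto_order.2 ⟨fun b hb ↦ ?_, fun b hb ↦ ?_⟩
  · filter_upwards [eventually_gt_atTop 0] with m hm
    exact hb.trans_le ((le_div_iff₀ hm).2 (mul_le_superlevelInf hU hW hL.1 hL0))
  · obtain ⟨_, ⟨a, ha, rfl⟩, hab⟩ := (isGLB_lt_iff hL).1 hb
    have hlim : Tendsto (fun m ↦ U a / W a + U a / m) atTop (nhds (U a / W a)) := by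
      simpa using (tendsto_const_nhds.div_atTop tendsto_id).const_add (U a / W a)
    filter_upwards [eventually_gt_atTop 0, hlim.eventually_lt_const hab] with m hm hmb
    calc superlevelInf U W m / m ≤ (U a / W a * m + U a) / m :=
          div_le_div_of_nonneg_right (superlevelInf_le_div_mul_add hU ha hm.le) hm.le
      _ = U a / W a + U a / m := by rw [add_div, mul_div_cancel_right₀ _ hm.ne']
      _ < b := hmb

end AddMonoid

section Weight

variable {ι : Type*} {u w : ι → ℝ} {L : ℝ}

theorem weight_nonneg {M : Type*} [AddCommMonoid M] [PartialOrder M] [IsOrderedAddMonoid M]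
    {v : ι → M} (hv : ∀ i, 0 ≤ v i) (α : ι →₀ ℕ) : 0 ≤ Finsupp.weight v α := by
  rw [Finsupp.weight_apply]
  exact Finset.sum_nonneg fun i _ ↦ nsmul_nonneg (hv i) _

theorem mul_weight_le_weight {R : Type*} [Semiring R] [PartialOrder R] [IsOrderedAddMonoid R]
    {c : R} {v v' : ι → R} (h : ∀ i, c * v i ≤ v' i) (α : ι →₀ ℕ) :
    c * Finsupp.weight v α ≤ Finsupp.weight v' α := by
  simp only [Finsupp.weight_apply, Finsupp.sum, Finset.mul_sum, mul_smul_comm]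
  exact Finset.sum_le_sum fun i _ ↦ nsmul_le_nsmul_right (h i) _

theorem positiveRatios_subset_positiveRatios_weight :
    positiveRatios u w ⊆ positiveRatios (Finsupp.weight u : (ι →₀ ℕ) → ℝ) (Finsupp.weight w) := by
  rintro _ ⟨i, hi, rfl⟩
  exact ⟨Finsupp.single i 1, by simpa [Finsupp.weight_single] using hi,
    by simp [Finsupp.weight_single]⟩

theorem isGLB_positiveRatios_weight (hu : ∀ i, 0 ≤ u i) (hL : IsGLB (positiveRatios u w) L) :
    IsGLB (positiveRatios (Finsupp.weight u : (ι →₀ ℕ) → ℝ) (Finsupp.weight w)) L := by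
  have hL0 : 0 ≤ L := hL.2 (zero_mem_lowerBounds_positiveRatios hu)
  refine ⟨?_, fun b hb ↦ hL.2 fun x hx ↦ hb (positiveRatios_subset_positiveRatios_weight hx)⟩
  rintro _ ⟨α, hα, rfl⟩
  refine (le_div_iff₀ hα).2 (mul_weight_le_weight (fun i ↦ ?_) α)
  exact mul_le_of_mem_lowerBounds_positiveRatios hL.1 hL0 (hu i)

theorem superlevelInf_weight_of_fintype [Fintype ι] (m : ℝ) :
    superlevelInf (Finsupp.weight u : (ι →₀ ℕ) → ℝ) (Finsupp.weight w) m =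
      sInf {x : ℝ | ∃ α : ι → ℕ,
        m ≤ ∑ i, w i * (α i : ℝ) ∧ x = ∑ i, u i * (α i : ℝ)} := by
  simp [superlevelInf, Finsupp.equivFunOnFinite.exists_congr_left, Finsupp.weight_apply,
    Finsupp.sum_fintype, mul_comm]

theorem tendsto_toric_asymptotic_order_general (hu : ∀ i, 0 ≤ u i) (hw : ∃ i, 0 < w i) :
    Tendsto (fun m ↦ superlevelInf (Finsupp.weight u : (ι →₀ ℕ) → ℝ) (Finsupp.weight w) m / m)
      atTop (nhds (sInf (positiveRatios u w))) := by
  have hL := isGLB_positiveRatios_weight hu (isGLB_sInf_positiveRatios hu hw)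
  obtain ⟨i, hi⟩ := hw
  exact tendsto_superlevelInf_div (weight_nonneg hu)
    ⟨Finsupp.single i 1, by simpa [Finsupp.weight_single] using hi⟩ hL

end Weight

/-- Let `u`, `w : Fin c → ℝ` be nonnegative weight vectors with `w` not identically
zero, and for `m > 0` let `G m` be the infimum of the `u`-weight `∑ i, u i * α i` over
all lattice points `α : Fin c → ℕ` with `∑ i, w i * α i ≥ m`.  Then `G m / m` converges
as `m → ∞` to `min { u i / w i : w i > 0 }`. -/
theorem tendsto_toric_asymptotic_order
    {c : ℕ} (u w : Fin c → ℝ) (hu : ∀ i, 0 ≤ u i) (hw : ∀ i, 0 ≤ w i) (hw0 : w ≠ 0) :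
    Tendsto
      (fun m : ℝ =>
        sInf {x : ℝ | ∃ α : Fin c → ℕ,
          m ≤ ∑ i, w i * (α i : ℝ) ∧ x = ∑ i, u i * (α i : ℝ)} / m)
      atTop
      (nhds (sInf {x : ℝ | ∃ i : Fin c, 0 < w i ∧ x = u i / w i})) := by
  simp only [← superlevelInf_weight_of_fintype]
  exact tendsto_toric_asymptotic_order_general hu (Pi.lt_def.1 (lt_of_le_of_ne hw hw0.symm)).2
end

section
/- Let c be a natural number and w : Fin c → ℝ a nonnegative weight vector such that the set I = { i : w(i) = 0 } is nonempty and its complement is nonempty. Let u : Fin c → ℝ be the indicator vector of the complement of I, i.e., u(i) = 1 if w(i) > 0 and u(i) = 0 if w(i) = 0. Setting L(x) = lim_{m→∞} (1/m)·inf{ Σ_i u(i)·α(i) : α : Fin c → ℕ, Σ_i x(i)·α(i) ≥ m } for nonnegative x ≠ 0, one has L(w) = min{ 1/w(i) : w(i) > 0 } > 0, while L(x) = 0 for every x with all coordinates positive; consequently L is not continuous at w (w is a limit of strictly positive vectors). -/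
/-!
Among the `i` with `0 < x i`, choose `j` minimizing `u i / x i`, and let `r` be the minimum. If
`u ≥ 0` then `r * x i ≤ u i` for every `i`, so the constraint `m ≤ ∑ i, x i * α i` forces
`r * m ≤ ∑ i, u i * α i`, while the multiple `⌈m / x j⌉` of the `j`-th basis vector is admissible
and has `u`-weight `r * m + O(1)`. Hence `L x = r`. At `w` this minimum runs over directions with
`0 < u i` and is positive, but as soon as a coordinate `i` with `u i = 0` is moved from `w i = 0` to
a positive value, it drops to `0`.
-/

open Filter

/-- `toricG u w m` is the infimum of the `u`-weight `∑ i, u i * α i` over all lattice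
points `α : Fin c → ℕ` satisfying `∑ i, w i * α i ≥ m`. -/
noncomputable def toricG {c : ℕ} (u w : Fin c → ℝ) (m : ℝ) : ℝ :=
  sInf {x : ℝ | ∃ α : Fin c → ℕ, m ≤ ∑ i, w i * (α i : ℝ) ∧ x = ∑ i, u i * (α i : ℝ)}

/-- `toricL u x` is the asymptotic `u`-weighted order `lim_{m→∞} toricG u x m / m`. -/
noncomputable def toricL {c : ℕ} (u x : Fin c → ℝ) : ℝ :=
  limUnder atTop (fun m : ℝ => toricG u x m / m)

theorem sum_mul_natCast_single {ι R : Type*} [Fintype ι] [DecidableEq ι] [NonAssocSemiring R]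
    (v : ι → R) (j : ι) (n : ℕ) :
    ∑ i, v i * ((Pi.single j n : ι → ℕ) i : R) = v j * n := by
  simp [Pi.single_apply]

/-- The `u`-weights of the exponents `α` of the monomials generating the `m`-th ideal attached to
`x`; `toricG u x m` unfolds to the infimum of this set. -/
def toricWeights {c : ℕ} (u x : Fin c → ℝ) (m : ℝ) : Set ℝ :=
  {y : ℝ | ∃ α : Fin c → ℕ, m ≤ ∑ i, x i * (α i : ℝ) ∧ y = ∑ i, u i * (α i : ℝ)}

section ToricOrder

variable {c : ℕ} {u x : Fin c → ℝ} {i j : Fin c} {r : ℝ}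

theorem mul_ceil_mem_toricWeights (u : Fin c → ℝ) (hj : 0 < x j) (m : ℝ) :
    u j * ⌈(x j)⁻¹ * m⌉₊ ∈ toricWeights u x m := by
  refine ⟨Pi.single j ⌈(x j)⁻¹ * m⌉₊, ?_, (sum_mul_natCast_single u j _).symm⟩
  rw [sum_mul_natCast_single, ← inv_mul_le_iff₀ hj]
  exact Nat.le_ceil _

theorem mul_mem_lowerBounds_toricWeights (hr : 0 ≤ r) (h : ∀ i, r * x i ≤ u i) (m : ℝ) :
    r * m ∈ lowerBounds (toricWeights u x m) := by
  rintro _ ⟨α, hα, rfl⟩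
  calc
    r * m ≤ r * ∑ i, x i * (α i : ℝ) := by gcongr
    _ = ∑ i, r * x i * (α i : ℝ) := by simp only [Finset.mul_sum, mul_assoc]
    _ ≤ ∑ i, u i * (α i : ℝ) := by gcongr with i; exact h i

theorem tendsto_toricG_div (huj : 0 ≤ u j) (hxj : 0 < x j) (h : ∀ i, u j / x j * x i ≤ u i) :
    Tendsto (fun m : ℝ => toricG u x m / m) atTop (nhds (u j / x j)) := by
  have lower_bound (m : ℝ) := mul_mem_lowerBounds_toricWeights (div_nonneg huj hxj.le) h m
  have single_mem (m : ℝ) := mul_ceil_mem_toricWeights u hxj m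
  have tendsto_single :
      Tendsto (fun m : ℝ => u j * (⌈(x j)⁻¹ * m⌉₊ / m)) atTop (nhds (u j / x j)) :=
    (tendsto_nat_ceil_mul_div_atTop (inv_nonneg.2 hxj.le)).const_mul (u j)
  refine tendsto_of_tendsto_of_tendsto_of_le_of_le' tendsto_const_nhds tendsto_single ?_ ?_
  · filter_upwards [eventually_gt_atTop 0] with m hm
    exact (le_div_iff₀ hm).2 (le_csInf ⟨_, single_mem m⟩ (lower_bound m))
  · filter_upwards [eventually_gt_atTop 0] with m hm
    rw [← mul_div_assoc]
    exact div_le_div_of_nonneg_right (csInf_le ⟨_, lower_bound m⟩ (single_mem m)) hm.le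

theorem isLeast_toricL (hu : ∀ i, 0 ≤ u i) (hx : ∃ i, 0 < x i) :
    IsLeast {t : ℝ | ∃ i, 0 < x i ∧ t = u i / x i} (toricL u x) := by
  obtain ⟨j, hxj, hmin⟩ :=
    Set.exists_min_image {i | 0 < x i} (fun i => u i / x i) (Set.toFinite _) hx
  have ratio_mul_le (i : Fin c) : u j / x j * x i ≤ u i := by
    rcases lt_or_ge 0 (x i) with hxi | hxi
    · exact (le_div_iff₀ hxi).1 (hmin i hxi)
    · exact (mul_nonpos_of_nonneg_of_nonpos (div_nonneg (hu j) (le_of_lt hxj)) hxi).trans (hu i)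
  have toricL_eq : toricL u x = u j / x j :=
    (tendsto_toricG_div (hu j) hxj ratio_mul_le).limUnder_eq
  refine ⟨⟨j, hxj, toricL_eq⟩, ?_⟩
  rintro _ ⟨i, hxi, rfl⟩
  exact toricL_eq.trans_le (hmin i hxi)

theorem toricL_pos (hu : ∀ i, 0 ≤ u i) (hx : ∃ i, 0 < x i) (hux : ∀ i, 0 < x i → 0 < u i) :
    0 < toricL u x := by
  obtain ⟨i, hxi, toricL_eq⟩ := (isLeast_toricL hu hx).1
  exact toricL_eq ▸ div_pos (hux i hxi) hxi

theorem toricL_eq_zero (hu : ∀ i, 0 ≤ u i) (hui : u i = 0) (hxi : 0 < x i) :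
    toricL u x = 0 := by
  have h := tendsto_toricG_div (hu i) hxi (by simpa [hui] using hu)
  rw [hui, zero_div] at h
  exact h.limUnder_eq

theorem not_continuousAt_toricL (hu : ∀ i, 0 ≤ u i) (hui : u i = 0) (hxi : x i = 0)
    (hL : toricL u x ≠ 0) : ¬ ContinuousAt (toricL u) x := by
  intro hcont
  have tendsto_update :
      Tendsto (Function.update x i) (nhdsWithin 0 (Set.Ioi 0)) (nhds x) := by
    have h := (continuous_const.update i continuous_id : Continuous (Function.update x i)).tendsto 0
    rw [← hxi, Function.update_eq_self, hxi] at h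
    exact h.mono_left nhdsWithin_le_nhds
  have toricL_update :
      toricL u ∘ Function.update x i =ᶠ[nhdsWithin 0 (Set.Ioi 0)] fun _ => 0 := by
    filter_upwards [self_mem_nhdsWithin] with t ht
    exact toricL_eq_zero hu hui (by simpa using ht)
  exact hL (tendsto_nhds_unique_of_eventuallyEq (hcont.tendsto.comp tendsto_update)
    tendsto_const_nhds toricL_update)

end ToricOrder

theorem toric_asymptotic_order_discontinuous_at_boundary_general
    {c : ℕ} {u w : Fin c → ℝ} (hu : ∀ i, 0 ≤ u i) (hw : ∃ i, 0 < w i)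
    (huw : ∀ i, 0 < w i → 0 < u i) (hzero : ∃ i, u i = 0 ∧ w i = 0) :
    toricL u w = sInf {t : ℝ | ∃ i : Fin c, 0 < w i ∧ t = u i / w i} ∧
    0 < toricL u w ∧
    (∀ x : Fin c → ℝ, (∀ i, 0 < x i) → toricL u x = 0) ∧
    ¬ ContinuousAt (toricL u) w := by
  obtain ⟨i, hui, hwi⟩ := hzero
  have hpos := toricL_pos hu hw huw
  exact ⟨(isLeast_toricL hu hw).csInf_eq.symm, hpos, fun x hx => toricL_eq_zero hu hui (hx i),
    not_continuousAt_toricL hu hui hwi hpos.ne'⟩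

/-- Let `w : Fin c → ℝ` be a nonnegative weight vector such that the set
`I = {i : w i = 0}` and its complement are both nonempty, and let `u` be the indicator
vector of the complement of `I`.  Then `L w = min {1 / w i : w i > 0} > 0`, while
`L x = 0` for every strictly positive `x`; consequently `L` is not continuous at `w`
(which is a limit of strictly positive vectors). -/
theorem toric_asymptotic_order_discontinuous_at_boundary
    {c : ℕ} (w : Fin c → ℝ) (hw : ∀ i, 0 ≤ w i)
    (hI : ∃ i, w i = 0) (hIc : ∃ i, w i ≠ 0)
    (u : Fin c → ℝ) (hu : ∀ i, u i = if 0 < w i then 1 else 0) :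
    toricL u w = sInf {t : ℝ | ∃ i : Fin c, 0 < w i ∧ t = 1 / w i} ∧
    0 < toricL u w ∧
    (∀ x : Fin c → ℝ, (∀ i, 0 < x i) → toricL u x = 0) ∧
    ¬ ContinuousAt (toricL u) w := by
  have ratio_iff (t : ℝ) (i : Fin c) : 0 < w i ∧ t = 1 / w i ↔ 0 < w i ∧ t = u i / w i :=
    and_congr_right fun hi => by rw [hu, if_pos hi]
  simp only [ratio_iff]
  exact toric_asymptotic_order_discontinuous_at_boundary_general
    (fun i => by rw [hu]; split_ifs <;> norm_num)
    (hIc.imp fun i hi => (hw i).lt_of_ne' hi)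
    (fun i hi => by rw [hu, if_pos hi]; exact one_pos)
    (hI.imp fun i hi => ⟨by rw [hu, if_neg hi.not_gt], hi⟩)
end
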